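/- arXiv:2212.01115 — 2 statements merged into one kernel-verified Lean document; each statement's English description precedes it below -/
import Mathlib

section
/- Let m ≥ 2 and n ≥ 1, and let A1, A2 be m-order n-dimensional real tensors. The pair Ã = {A1, A2} is of type VR0 if and only if for all q1, q2 ∈ ℝⁿ, all t > 0 and all s ∈ ℝ, the set τ(q1, q2, s, t) = {x ∈ ℝⁿ : q1 + A1 x^{m-1} ≥ 0, q2 + A2 x^{m-1} ≥ 0, (q1 + A1 x^{m-1})ᵀ(q2 + t·A2 x^{m-1}) ≤ s} is bounded. -/
open Finset

/-- For an `m`-order `n`-dimensional real tensor `A` (the first index separated, the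
remaining `m-1` indices given as a function `Fin (m-1) → Fin n`),
`tProd A x i = (A x^{m-1})_i = ∑_{i2,…,im} a_{i i2 ⋯ im} x_{i2} ⋯ x_{im}`. -/
noncomputable def tProd {n k : ℕ} (A : Fin n → (Fin k → Fin n) → ℝ)
    (x : Fin n → ℝ) : Fin n → ℝ :=
  fun i => ∑ f : Fin k → Fin n, A i f * ∏ j, x (f j)

/-!
The asymptotic cone of every `τ(q₁, q₂, s, t)` is contained in `τ(0, 0, 0, t)`: by homogeneity
`c • w ∈ τ(q₁, q₂, s, t)` says that `w` lies in a set of the same form with parameters scaled by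
negative powers of `c`, and these tend to `0` as `c → ∞`. On the other hand `τ(0, 0, 0, t)` is
itself a cone, namely the set of `x` with `A₁ x^{m-1} ∧ A₂ x^{m-1} = 0`, since nonnegative vectors
are orthogonal exactly when their minimum vanishes. A subset of a finite-dimensional space is
bounded if and only if its asymptotic cone is trivial.
-/

/-- A map is positively homogeneous of degree `a` if it turns scaling by `c > 0` into scaling by
`c ^ a`. The degree is real; `tProd` of a tensor of order `k + 1` has degree `k`. -/
def IsPosHomogeneous {E V : Type*} [SMul ℝ E] [SMul ℝ V] (a : ℝ) (F : E → V) : Prop :=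
  ∀ ⦃c : ℝ⦄, 0 < c → ∀ x, F (c • x) = c ^ a • F x

/-- The type VR0 condition for a pair of vector-valued maps in place of `x ↦ A₁ x^{m-1}` and
`x ↦ A₂ x^{m-1}`; the componentwise minimum is the lattice operation `⊓`. -/
def IsVR0 {E ι : Type*} [Zero E] (F G : E → ι → ℝ) : Prop :=
  ∀ x, F x ⊓ G x = 0 → x = 0

/-- The set `τ(q₁, q₂, s, t)`, for maps `F` and `G` in place of `x ↦ A₁ x^{m-1}` and
`x ↦ A₂ x^{m-1}`. -/
def tauSet {E ι : Type*} [Fintype ι] (F G : E → ι → ℝ) (q₁ q₂ : ι → ℝ) (s t : ℝ) : Set E :=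
  {x | 0 ≤ q₁ + F x ∧ 0 ≤ q₂ + G x ∧ (q₁ + F x) ⬝ᵥ (q₂ + t • G x) ≤ s}

theorem inf_eq_zero_iff_dotProduct_nonpos {ι R : Type*} [Fintype ι] [Ring R] [LinearOrder R]
    [IsStrictOrderedRing R] {u v : ι → R} :
    u ⊓ v = 0 ↔ 0 ≤ u ∧ 0 ≤ v ∧ u ⬝ᵥ v ≤ 0 := by
  constructor
  · intro h
    refine ⟨h ▸ inf_le_left, h ▸ inf_le_right, (sum_eq_zero fun i _ => ?_).le⟩
    have hi : min (u i) (v i) = 0 := congrFun h i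
    rcases min_choice (u i) (v i) with hmin | hmin
    · rw [← hmin, hi, zero_mul]
    · rw [← hmin, hi, mul_zero]
  · rintro ⟨hu, hv, huv⟩
    have hnonneg : ∀ i ∈ univ, 0 ≤ u i * v i := fun i _ => mul_nonneg (hu i) (hv i)
    have hzero := (sum_eq_zero_iff_of_nonneg hnonneg).1 (huv.antisymm (sum_nonneg hnonneg))
    ext i
    rcases mul_eq_zero.1 (hzero i (mem_univ i)) with hi | hi
    · exact (min_eq_left (hi.trans_le (hv i))).trans hi
    · exact (min_eq_right (hi.trans_le (hu i))).trans hi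

section TauSet

open Filter Topology

variable {E ι : Type*} [Fintype ι] {F G : E → ι → ℝ} {q₁ q₂ : ι → ℝ} {a b s t : ℝ}

theorem mem_tauSet_zero_iff (ht : 0 < t) {x : E} :
    x ∈ tauSet F G 0 0 0 t ↔ F x ⊓ G x = 0 := by
  rw [inf_eq_zero_iff_dotProduct_nonpos]
  simp only [tauSet, Set.mem_ofPred_eq, zero_add, dotProduct_smul,
    smul_nonpos_iff_nonpos_of_pos_left ht]

theorem isVR0_iff_tauSet_zero_subset [Zero E] (ht : 0 < t) :
    IsVR0 F G ↔ tauSet F G 0 0 0 t ⊆ {0} :=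
  forall_congr' fun _ => by rw [mem_tauSet_zero_iff ht, Set.mem_singleton_iff]

theorem smul_mem_tauSet_iff [SMul ℝ E] (hF : IsPosHomogeneous a F) (hG : IsPosHomogeneous b G)
    {c : ℝ} (hc : 0 < c) {x : E} :
    c • x ∈ tauSet F G (c ^ a • q₁) (c ^ b • q₂) (c ^ (a + b) * s) t ↔
      x ∈ tauSet F G q₁ q₂ s t := by
  have hF_smul : c ^ a • q₁ + F (c • x) = c ^ a • (q₁ + F x) := by rw [hF hc, smul_add]
  have hG_smul : c ^ b • q₂ + G (c • x) = c ^ b • (q₂ + G x) := by rw [hG hc, smul_add]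
  have htG_smul : c ^ b • q₂ + t • G (c • x) = c ^ b • (q₂ + t • G x) := by
    rw [hG hc, smul_comm t, smul_add]
  have hdot_le : (c ^ a • (q₁ + F x)) ⬝ᵥ (c ^ b • (q₂ + t • G x)) ≤ c ^ (a + b) * s ↔
      (q₁ + F x) ⬝ᵥ (q₂ + t • G x) ≤ s := by
    rw [smul_dotProduct, dotProduct_smul, smul_smul, ← Real.rpow_add hc, smul_eq_mul,
      mul_le_mul_iff_right₀ (Real.rpow_pos_of_pos hc _)]
  simp only [tauSet, Set.mem_ofPred_eq, hF_smul, hG_smul, htG_smul, hdot_le,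
    smul_nonneg_iff_nonneg_of_pos_left (Real.rpow_pos_of_pos hc _)]

theorem isClosed_setOf_mem_tauSet [TopologicalSpace E] (hF : Continuous F) (hG : Continuous G) :
    IsClosed {p : (ι → ℝ) × (ι → ℝ) × ℝ × E | p.2.2.2 ∈ tauSet F G p.1 p.2.1 p.2.2.1 t} := by
  simp only [tauSet, Set.mem_ofPred_eq]
  exact (isClosed_le (by fun_prop) (by fun_prop)).and
    ((isClosed_le (by fun_prop) (by fun_prop)).and (isClosed_le (by fun_prop) (by fun_prop)))

section TopologicalVectorSpace

variable [AddCommGroup E] [Module ℝ E] [TopologicalSpace E] [IsTopologicalAddGroup E]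
  [ContinuousSMul ℝ E]

theorem tauSet_zero_subset_asymptoticCone (hF : IsPosHomogeneous a F)
    (hG : IsPosHomogeneous b G) :
    tauSet F G 0 0 0 t ⊆ asymptoticCone ℝ (tauSet F G 0 0 0 t) := by
  rw [asymptoticCone_eq_closure_of_forall_smul_mem]
  · exact subset_closure
  · intro c hc x hx
    simpa only [smul_zero, mul_zero] using (smul_mem_tauSet_iff hF hG hc).2 hx

theorem asymptoticCone_tauSet_subset (hF : IsPosHomogeneous a F) (hG : IsPosHomogeneous b G)
    (ha : 0 < a) (hb : 0 < b) (hFc : Continuous F) (hGc : Continuous G) :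
    asymptoticCone ℝ (tauSet F G q₁ q₂ s t) ⊆ tauSet F G 0 0 0 t := by
  intro v hv
  have hfreq : ∃ᶠ p : ℝ × E in atTop ×ˢ 𝓝 v, p.1 • p.2 ∈ tauSet F G q₁ q₂ s t := by
    rwa [mem_asymptoticCone_iff, AffineSpace.asymptoticNhds_eq_smul, ← map₂_smul,
      ← map_prod_eq_map₂, frequently_map] at hv
  have hscaled : ∃ᶠ p : ℝ × E in atTop ×ˢ 𝓝 v,
      p.2 ∈ tauSet F G (p.1⁻¹ ^ a • q₁) (p.1⁻¹ ^ b • q₂) (p.1⁻¹ ^ (a + b) * s) t := by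
    refine (hfreq.and_eventually (tendsto_fst.eventually_gt_atTop 0)).mono ?_
    rintro ⟨c, w⟩ ⟨hmem, hc : 0 < c⟩
    simpa only [inv_smul_smul₀ hc.ne'] using (smul_mem_tauSet_iff hF hG (inv_pos.2 hc)).2 hmem
  have hpow {r : ℝ} (hr : 0 < r) :
      Tendsto (fun p : ℝ × E => p.1⁻¹ ^ r) (atTop ×ˢ 𝓝 v) (𝓝 0) := by
    simpa only [Real.zero_rpow hr.ne', Function.comp_apply] using
      (tendsto_inv_atTop_zero.comp tendsto_fst).rpow_const (Or.inr hr.le)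
  have hlim : Tendsto
      (fun p : ℝ × E => (p.1⁻¹ ^ a • q₁, p.1⁻¹ ^ b • q₂, p.1⁻¹ ^ (a + b) * s, p.2))
      (atTop ×ˢ 𝓝 v) (𝓝 (0, 0, 0, v)) := by
    simpa only [zero_smul, zero_mul] using ((hpow ha).smul_const q₁).prodMk_nhds
      (((hpow hb).smul_const q₂).prodMk_nhds
        (((hpow (add_pos ha hb)).mul_const s).prodMk_nhds tendsto_snd))
  exact (isClosed_setOf_mem_tauSet hFc hGc).mem_of_frequently_of_tendsto hscaled hlim

end TopologicalVectorSpace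

theorem stmt_8_general [NormedAddCommGroup E] [NormedSpace ℝ E] [FiniteDimensional ℝ E]
    (hF : IsPosHomogeneous a F) (hG : IsPosHomogeneous b G) (ha : 0 < a) (hb : 0 < b)
    (hFc : Continuous F) (hGc : Continuous G) :
    IsVR0 F G ↔ ∀ (q₁ q₂ : ι → ℝ) (t s : ℝ), 0 < t →
      Bornology.IsBounded (tauSet F G q₁ q₂ s t) := by
  simp only [isBounded_iff_asymptoticCone_subset_singleton]
  constructor
  · intro h q₁ q₂ t s ht
    exact (asymptoticCone_tauSet_subset hF hG ha hb hFc hGc).trans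
      ((isVR0_iff_tauSet_zero_subset ht).1 h)
  · intro h
    exact (isVR0_iff_tauSet_zero_subset one_pos).2
      ((tauSet_zero_subset_asymptoticCone hF hG).trans (h 0 0 1 0 one_pos))

end TauSet

section Tensor

variable {n k : ℕ} (A : Fin n → (Fin k → Fin n) → ℝ)

theorem tProd_smul (c : ℝ) (x : Fin n → ℝ) : tProd A (c • x) = c ^ k • tProd A x := by
  ext i
  simp only [tProd, Pi.smul_apply, smul_eq_mul, prod_mul_distrib, prod_const, card_univ,
    Fintype.card_fin, mul_sum, mul_left_comm]

theorem isPosHomogeneous_tProd : IsPosHomogeneous k (tProd A) := fun c _ x => by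
  rw [Real.rpow_natCast, tProd_smul]

theorem continuous_tProd : Continuous (tProd A) := by
  unfold tProd
  fun_prop

end Tensor

/-- `{A1, A2}` is of type VR0 iff for all `q1, q2`, `t > 0` and `s` the set
`τ(q1,q2,s,t)` is bounded. -/
theorem stmt_8 {m n : ℕ} (hm : 2 ≤ m) (hn : 1 ≤ n)
    (A1 A2 : Fin n → (Fin (m - 1) → Fin n) → ℝ) :
    (∀ x : Fin n → ℝ, (∀ i, min (tProd A1 x i) (tProd A2 x i) = 0) → x = 0) ↔
      ∀ (q1 q2 : Fin n → ℝ) (t s : ℝ), 0 < t →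
        Bornology.IsBounded {x : Fin n → ℝ |
          (∀ i, 0 ≤ q1 i + tProd A1 x i) ∧ (∀ i, 0 ≤ q2 i + tProd A2 x i) ∧
          ∑ i, (q1 i + tProd A1 x i) * (q2 i + t * tProd A2 x i) ≤ s} := by
  have hdeg : (0 : ℝ) < (m - 1 : ℕ) := Nat.cast_pos.2 (by omega)
  exact (forall_congr' fun _ => imp_congr_left funext_iff.symm).trans
    (stmt_8_general (isPosHomogeneous_tProd A1) (isPosHomogeneous_tProd A2) hdeg hdeg
      (continuous_tProd A1) (continuous_tProd A2))
end

section
/- Let m > 2 be an even number and n ≥ 1, and let A1, A2 be m-order n-dimensional real tensors. If the pair Ã = {A1, A2} is of type VP-II and A2 is an R-tensor, then for all q1, q2 ∈ ℝⁿ the vertical tensor complementarity problem VTCP(Ã, q̃) has a unique solution. -/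
open Finset

/-- The product `A Z` of an `m`-order tensor `A` with an `(m-1)`-order tensor `Z`:
`(A Z)_i = ∑_{i2,…,im} a_{i i2 ⋯ im} z_{i2 ⋯ im}`. -/
noncomputable def tApplyZ {n k : ℕ} (A : Fin n → (Fin k → Fin n) → ℝ)
    (Z : (Fin k → Fin n) → ℝ) : Fin n → ℝ :=
  fun i => ∑ f : Fin k → Fin n, A i f * Z f

/-- A `k`-order tensor is symmetric if its entries are invariant under all
permutations of its indices. -/
def SymTensor {n k : ℕ} (Z : (Fin k → Fin n) → ℝ) : Prop :=
  ∀ (σ : Equiv.Perm (Fin k)) (f : Fin k → Fin n), Z (f ∘ σ) = Z f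

/-- The pair `{A1, A2}` is of type VP-II: there is no symmetric `(m-1)`-order tensor `Z`
whose diagonal entries are not all zero with `A1 Z ∧ A2 Z ≤ 0 ≤ A1 Z ∨ A2 Z`. -/
def VPII {n k : ℕ} (A1 A2 : Fin n → (Fin k → Fin n) → ℝ) : Prop :=
  ¬ ∃ Z : (Fin k → Fin n) → ℝ, SymTensor Z ∧ (∃ i : Fin n, Z (fun _ => i) ≠ 0) ∧
    ∀ i, min (tApplyZ A1 Z i) (tApplyZ A2 Z i) ≤ 0 ∧
      0 ≤ max (tApplyZ A1 Z i) (tApplyZ A2 Z i)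

/-- `A` is an R-tensor: there is no `x ≥ 0`, `x ≠ 0` and `t ≥ 0` such that
`(A x^{m-1})_i + t = 0` whenever `x_i > 0` and `(A x^{m-1})_j + t ≥ 0` whenever `x_j = 0`. -/
def RTensor {n k : ℕ} (A : Fin n → (Fin k → Fin n) → ℝ) : Prop :=
  ¬ ∃ (x : Fin n → ℝ) (t : ℝ), (∀ i, 0 ≤ x i) ∧ x ≠ 0 ∧ 0 ≤ t ∧
    (∀ i, 0 < x i → tProd A x i + t = 0) ∧ (∀ j, x j = 0 → 0 ≤ tProd A x j + t)

/-- `x` solves the vertical tensor complementarity problem VTCP({A1,A2},{q1,q2}):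
`q1 + A1 x^{m-1} ≥ 0`, `q2 + A2 x^{m-1} ≥ 0`, and
`(q1 + A1 x^{m-1})ᵀ (q2 + A2 x^{m-1}) = 0`. -/
def VTCPSol {n k : ℕ} (A1 A2 : Fin n → (Fin k → Fin n) → ℝ)
    (q1 q2 x : Fin n → ℝ) : Prop :=
  (∀ i, 0 ≤ q1 i + tProd A1 x i) ∧ (∀ i, 0 ≤ q2 i + tProd A2 x i) ∧
    ∑ i, (q1 i + tProd A1 x i) * (q2 i + tProd A2 x i) = 0

/-!
Write `k = m - 1`, `x ^ k` for the componentwise power and `x^{⊗k}` for the symmetric tensor with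
entries `x_{i2} ⋯ x_{im}`. The diagonal of `x^{⊗k}` is `x ^ k`, and every vector is such a diagonal
because `k` is odd. Type VP-II puts the kernel of `Z ↦ A_j Z` on symmetric tensors inside the kernel
of the diagonal map, so by a dimension count `A_j Z` depends linearly on the diagonal of `Z` alone:
`A_j x^{m-1} = M_j (x ^ k)` for linear maps `M₁`, `M₂`, and type VP-II gives that for each `y ≠ 0`
some `(M₁ y)_i (M₂ y)_i` is positive.

The problem becomes `min (q₁ + M₁ y) (q₂ + M₂ y) = 0` with `y = x ^ k`. Along the straight homotopy
from `q₂ + M₂ y` to this minimum, the increment between two points at difference `d` has the form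
`M₂ d + θ (M₁ d - M₂ d)` with `θ ∈ [0, 1]^n`, and by compactness its norm is at least `c ‖d‖`.
The method of continuity then makes the minimum map bijective.
-/

open Function NNReal

theorem surjective_add_of_antilipschitzWith_of_lipschitzWith {α F : Type*} [PseudoEMetricSpace α]
    [NormedAddCommGroup F] [CompleteSpace F] {f g : α → F} {K L : ℝ≥0}
    (hf : AntilipschitzWith K f) (hsurj : Surjective f) (hg : LipschitzWith L g)
    (hLK : L * K < 1) : Surjective (f + g) := by
  intro b
  obtain ⟨r, hr⟩ := hsurj.hasRightInverse
  have hcontr : ContractingWith (L * K) fun z => b - g (r z) :=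
    ⟨hLK, by simpa only [zero_add, comp_apply] using
      (LipschitzWith.const b).sub (hg.comp (hf.to_rightInverse hr))⟩
  obtain ⟨z, hz⟩ : ∃ z, b - g (r z) = z := ⟨_, hcontr.fixedPoint_isFixedPt⟩
  exact ⟨r z, by rw [Pi.add_apply, hr, ← eq_sub_iff_add_eq, hz]⟩

theorem surjective_add_of_forall_antilipschitzWith {α F : Type*} [PseudoEMetricSpace α]
    [NormedAddCommGroup F] [NormedSpace ℝ F] [CompleteSpace F] {f g : α → F} {K L : ℝ≥0}
    (hanti : ∀ s ∈ Set.Icc (0 : ℝ) 1, AntilipschitzWith K (f + s • g))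
    (hsurj : Surjective f) (hg : LipschitzWith L g) : Surjective (f + g) := by
  obtain ⟨N, hN⟩ := exists_nat_gt (L * K)
  have hNpos : (0 : ℝ≥0) < N := hN.pos
  have hN0 : (N : ℝ) ≠ 0 := by exact_mod_cast hNpos.ne'
  have hincr : LipschitzWith ((N : ℝ≥0)⁻¹ * L) ((N : ℝ)⁻¹ • g) := by
    simpa only [nnnorm_inv, Real.nnnorm_natCast] using! (lipschitzWith_smul (N : ℝ)⁻¹).comp hg
  have hsmall : (N : ℝ≥0)⁻¹ * L * K < 1 := by rwa [mul_assoc, inv_mul_lt_one₀ hNpos]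
  have hsteps : ∀ j ≤ N, Surjective (f + (j / N : ℝ) • g) := by
    intro j
    induction j with
    | zero => simpa only [Nat.cast_zero, zero_div, zero_smul, add_zero] using fun _ => hsurj
    | succ j ih =>
      intro hj
      have hjN : j ≤ N := (Nat.le_succ j).trans hj
      have hmem : (j / N : ℝ) ∈ Set.Icc (0 : ℝ) 1 :=
        ⟨by positivity, div_le_one_of_le₀ (by exact_mod_cast hjN) N.cast_nonneg⟩
      have hsplit : f + ((j + 1 : ℕ) / N : ℝ) • g = f + (j / N : ℝ) • g + (N : ℝ)⁻¹ • g := by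
        rw [add_assoc, ← add_smul, Nat.cast_succ, add_div, one_div]
      rw [hsplit]
      exact surjective_add_of_antilipschitzWith_of_lipschitzWith (hanti _ hmem) (ih hjN) hincr
        hsmall
  simpa only [div_self hN0, one_smul] using hsteps N le_rfl

theorem exists_min_sub_min_eq_mul {𝕜 : Type*} [Field 𝕜] [LinearOrder 𝕜] [IsStrictOrderedRing 𝕜]
    (u v a : 𝕜) : ∃ θ ∈ Set.Icc (0 : 𝕜) 1, min u a - min v a = θ * (u - v) := by
  wlog huv : v < u generalizing u v
  · rcases (not_lt.1 huv).eq_or_lt with rfl | hlt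
    · exact ⟨0, by simp, by simp⟩
    · obtain ⟨θ, hθ, h⟩ := this v u hlt
      exact ⟨θ, hθ, by linear_combination -h⟩
  have hpos : 0 < u - v := sub_pos.2 huv
  refine ⟨(min u a - min v a) / (u - v), ⟨div_nonneg ?_ hpos.le, (div_le_one hpos).2 ?_⟩,
    (div_mul_cancel₀ _ hpos.ne').symm⟩
  · exact sub_nonneg.2 (min_le_min_right a huv.le)
  · grind

theorem lipschitzWith_pi_inf_right {ι : Type*} [Fintype ι] (a : ι → ℝ) :
    LipschitzWith 1 fun v : ι → ℝ => v ⊓ a := by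
  refine LipschitzWith.mk_one fun u v => (dist_pi_le_iff dist_nonneg).2 fun i => ?_
  simpa only [NNReal.coe_one, one_mul] using!
    ((LipschitzWith.eval (α := fun _ : ι => ℝ) i).min_const (a i)).dist_le_mul u v

section PPair

variable {ι : Type*}

/-- The linear counterpart of type VP-II: the pair has the vertical P-property, which for
`M₂ = id` says that `M₁` is given by a P-matrix. -/
def IsPPair (M₁ M₂ : (ι → ℝ) →ₗ[ℝ] (ι → ℝ)) : Prop :=
  ∀ y ≠ 0, ∃ i, 0 < M₁ y i * M₂ y i

namespace IsPPair

variable {M₁ M₂ : (ι → ℝ) →ₗ[ℝ] (ι → ℝ)}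

theorem add_mul_sub_ne_zero (h : IsPPair M₁ M₂) {θ : ι → ℝ} (hθ : θ ∈ Set.Icc 0 1)
    {y : ι → ℝ} (hy : y ≠ 0) : M₂ y + θ * (M₁ y - M₂ y) ≠ 0 := by
  intro hzero
  obtain ⟨i, hi⟩ := h y hy
  have hsq : 0 < M₂ y i ^ 2 := pow_two_pos_of_ne_zero (right_ne_zero_of_mul hi.ne')
  have hcomb : 0 < (1 - θ i) * M₂ y i ^ 2 + θ i * (M₁ y i * M₂ y i) :=
    convex_Ioi (0 : ℝ) hsq hi (sub_nonneg.2 (hθ.2 i)) (hθ.1 i) (sub_add_cancel (1 : ℝ) (θ i))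
  have hzero_i : M₂ y i + θ i * (M₁ y i - M₂ y i) = 0 := congrFun hzero i
  exact hcomb.ne' (by linear_combination M₂ y i * hzero_i)

theorem exists_mul_norm_le [Fintype ι] (h : IsPPair M₁ M₂) :
    ∃ c > 0, ∀ θ ∈ Set.Icc (0 : ι → ℝ) 1, ∀ y, c * ‖y‖ ≤ ‖M₂ y + θ * (M₁ y - M₂ y)‖ := by
  have hM₁ : Continuous M₁ := M₁.continuous_of_finiteDimensional
  have hM₂ : Continuous M₂ := M₂.continuous_of_finiteDimensional
  obtain ⟨c, hc, hle⟩ := (isCompact_Icc.prod (isCompact_sphere (0 : ι → ℝ) 1)).exists_forall_le'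
    (f := fun p : (ι → ℝ) × (ι → ℝ) => ‖M₂ p.2 + p.1 * (M₁ p.2 - M₂ p.2)‖)
    (s := Set.Icc 0 1 ×ˢ Metric.sphere 0 1) (by fun_prop) fun p hp =>
      norm_pos_iff.2 (h.add_mul_sub_ne_zero hp.1 (ne_zero_of_mem_unit_sphere ⟨p.2, hp.2⟩))
  refine ⟨c, hc, fun θ hθ y => ?_⟩
  rcases eq_or_ne y 0 with rfl | hy
  · simp
  have hy' : 0 < ‖y‖ := norm_pos_iff.2 hy
  have hunit : ‖y‖⁻¹ • y ∈ Metric.sphere (0 : ι → ℝ) 1 := by simp [norm_smul, hy'.ne']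
  have := hle (θ, ‖y‖⁻¹ • y) ⟨hθ, hunit⟩
  simp only [map_smul, ← smul_sub, mul_smul_comm, ← smul_add, norm_smul, norm_inv, norm_norm]
    at this
  rwa [le_inv_mul_iff₀ hy', mul_comm] at this

theorem exists_forall_antilipschitzWith [Fintype ι] (h : IsPPair M₁ M₂) (p q : ι → ℝ) :
    ∃ K : ℝ≥0, ∀ s ∈ Set.Icc (0 : ℝ) 1, AntilipschitzWith K
      ((fun y => q + M₂ y) + s • fun y => (p + (M₁ - M₂) y) ⊓ 0) := by
  obtain ⟨c, hc, hle⟩ := h.exists_mul_norm_le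
  refine ⟨c⁻¹.toNNReal, fun s hs => AntilipschitzWith.of_le_mul_dist fun y z => ?_⟩
  choose θ hθ hmin using fun i =>
    exists_min_sub_min_eq_mul ((p + (M₁ - M₂) y) i) ((p + (M₁ - M₂) z) i) 0
  have hsθ : s • θ ∈ Set.Icc (0 : ι → ℝ) 1 :=
    ⟨fun i => mul_nonneg hs.1 (hθ i).1, fun i => mul_le_one₀ hs.2 (hθ i).1 (hθ i).2⟩
  have hincr : (q + M₂ y + s • ((p + (M₁ - M₂) y) ⊓ 0)) -
      (q + M₂ z + s • ((p + (M₁ - M₂) z) ⊓ 0)) =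
        M₂ (y - z) + s • θ * (M₁ (y - z) - M₂ (y - z)) := by
    ext i
    have hmin_i := hmin i
    simp only [map_sub, LinearMap.sub_apply, Pi.add_apply, Pi.sub_apply, Pi.smul_apply,
      Pi.mul_apply, Pi.inf_apply, Pi.zero_apply, smul_eq_mul] at hmin_i ⊢
    linear_combination s * hmin_i
  rw [dist_eq_norm, dist_eq_norm, Real.coe_toNNReal _ (inv_nonneg.2 hc.le), le_inv_mul_iff₀ hc]
  exact (hle _ hsθ (y - z)).trans_eq (congrArg norm hincr.symm)

theorem surjective_right [Finite ι] (h : IsPPair M₁ M₂) : Surjective M₂ := by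
  refine LinearMap.surjective_of_injective ((injective_iff_map_eq_zero M₂).2 fun y hy => ?_)
  by_contra hne
  obtain ⟨i, hi⟩ := h y hne
  simp [hy] at hi

theorem bijective_inf [Finite ι] (h : IsPPair M₁ M₂) (q₁ q₂ : ι → ℝ) :
    Bijective fun y => (q₁ + M₁ y) ⊓ (q₂ + M₂ y) := by
  have := Fintype.ofFinite ι
  let f : (ι → ℝ) → ι → ℝ := fun y => q₂ + M₂ y
  let g : (ι → ℝ) → ι → ℝ := fun y => (q₁ - q₂ + (M₁ - M₂) y) ⊓ 0
  obtain ⟨K, hanti⟩ := h.exists_forall_antilipschitzWith (q₁ - q₂) q₂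
  have hf : Surjective f := (Equiv.addLeft q₂).surjective.comp h.surjective_right
  have hg : LipschitzWith _ g := (lipschitzWith_pi_inf_right 0).comp
    ((LipschitzWith.const _).add (M₁ - M₂).toContinuousLinearMap.lipschitz)
  have hfg : (fun y => (q₁ + M₁ y) ⊓ (q₂ + M₂ y)) = f + g := by
    funext y
    simp only [f, g, Pi.add_apply, add_inf, add_zero, LinearMap.sub_apply]
    congr 1
    abel
  rw [hfg]
  refine ⟨?_, surjective_add_of_forall_antilipschitzWith hanti hf hg⟩
  simpa only [one_smul] using! (hanti 1 (Set.right_mem_Icc.2 zero_le_one)).injective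

end IsPPair

end PPair

theorem exists_eq_comp_of_surjective_of_ker_le {𝕜 V W : Type*} [DivisionRing 𝕜]
    [AddCommGroup V] [Module 𝕜 V] [AddCommGroup W] [Module 𝕜 W] [FiniteDimensional 𝕜 W]
    {A δ : V →ₗ[𝕜] W} (hδ : Surjective δ) (hker : A.ker ≤ δ.ker) :
    ∃ M : W →ₗ[𝕜] W, A = M ∘ₗ δ := by
  obtain ⟨r, hr⟩ := δ.exists_rightInverse_of_surjective (LinearMap.range_eq_top.2 hδ)
  have hδr (w : W) : δ (r w) = w := LinearMap.congr_fun hr w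
  have hinj : Injective (A ∘ₗ r) := (injective_iff_map_eq_zero _).2 fun w hw =>
    (hδr w).symm.trans (hker hw)
  refine ⟨A ∘ₗ r, LinearMap.ext fun v => ?_⟩
  obtain ⟨w, hw⟩ : ∃ w, A (r w) = A v := LinearMap.surjective_of_injective hinj (A v)
  have hδv : δ v = w := by
    have hmem : v - r w ∈ δ.ker := hker (LinearMap.sub_mem_ker_iff.2 hw.symm)
    rw [LinearMap.sub_mem_ker_iff.1 hmem, hδr]
  rw [LinearMap.comp_apply, LinearMap.comp_apply, hδv, hw]

theorem bijective_pow_of_odd {k : ℕ} (hk : Odd k) : Bijective fun x : ℝ => x ^ k := by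
  have hroot (y : ℝ) (hy : 0 ≤ y) : (y ^ (k : ℝ)⁻¹) ^ k = y :=
    Real.rpow_inv_natCast_pow hy hk.pos.ne'
  refine ⟨hk.strictMono_pow.injective, fun y => ?_⟩
  rcases le_total 0 y with hy | hy
  · exact ⟨_, hroot y hy⟩
  · exact ⟨-(-y) ^ (k : ℝ)⁻¹, by simp only [hk.neg_pow, hroot _ (neg_nonneg.2 hy), neg_neg]⟩

section Tensors

variable {n k : ℕ}

/-- The space of symmetric `k`-order `n`-dimensional tensors. -/
def symTensors (n k : ℕ) : Submodule ℝ ((Fin k → Fin n) → ℝ) where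
  carrier := {Z | SymTensor Z}
  zero_mem' _ _ := rfl
  add_mem' hZ hW σ f := congrArg₂ (· + ·) (hZ σ f) (hW σ f)
  smul_mem' c _ hZ σ f := congrArg (c * ·) (hZ σ f)

/-- The vector `(z_{1⋯1}, …, z_{n⋯n})` of diagonal entries, as a linear map. -/
def tensorDiag (n k : ℕ) : symTensors n k →ₗ[ℝ] (Fin n → ℝ) :=
  LinearMap.funLeft ℝ ℝ (fun i _ => i) ∘ₗ (symTensors n k).subtype

/-- `tApplyZ A` as a linear map on symmetric tensors: multiplication by the `n × n ^ k` matrix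
obtained by grouping the last `k` indices of `A`. -/
def tApplyLin (A : Fin n → (Fin k → Fin n) → ℝ) : symTensors n k →ₗ[ℝ] (Fin n → ℝ) :=
  (Matrix.of A).mulVecLin ∘ₗ (symTensors n k).subtype

/-- The symmetric rank-one tensor `x^{⊗k}`, with entries `x_{i1} ⋯ x_{ik}`. -/
def tensorPow (k : ℕ) (x : Fin n → ℝ) : symTensors n k :=
  ⟨fun f => ∏ j, x (f j), fun σ f => Equiv.prod_comp σ fun j => x (f j)⟩

theorem tApplyLin_tensorPow (A : Fin n → (Fin k → Fin n) → ℝ) (x : Fin n → ℝ) :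
    tApplyLin A (tensorPow k x) = tProd A x :=
  rfl

theorem tensorDiag_tensorPow (x : Fin n → ℝ) : tensorDiag n k (tensorPow k x) = x ^ k := by
  ext i
  simp [tensorDiag, tensorPow, LinearMap.funLeft_apply]

theorem bijective_pi_pow_of_odd (hk : Odd k) : Bijective fun x : Fin n → ℝ => x ^ k :=
  Bijective.piMap fun _ => bijective_pow_of_odd hk

theorem surjective_tensorDiag (hk : Odd k) : Surjective (tensorDiag n k) := fun y => by
  obtain ⟨x, rfl⟩ := (bijective_pi_pow_of_odd hk).surjective y
  exact ⟨tensorPow k x, tensorDiag_tensorPow x⟩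

variable {A1 A2 : Fin n → (Fin k → Fin n) → ℝ}

namespace VPII

theorem symm (h : VPII A1 A2) : VPII A2 A1 := by
  simpa only [VPII, min_comm, max_comm] using h

theorem exists_tApplyLin_mul_pos (h : VPII A1 A2) {Z : symTensors n k}
    (hZ : tensorDiag n k Z ≠ 0) : ∃ i, 0 < tApplyLin A1 Z i * tApplyLin A2 Z i := by
  by_contra! hle
  refine h ⟨Z, Z.2, Function.ne_iff.1 hZ, fun i => ?_⟩
  rcases mul_nonpos_iff.1 (hle i) with ⟨h1, h2⟩ | ⟨h1, h2⟩
  · exact ⟨min_le_of_right_le h2, le_max_of_le_left h1⟩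
  · exact ⟨min_le_of_left_le h1, le_max_of_le_right h2⟩

theorem ker_tApplyLin_le (h : VPII A1 A2) : (tApplyLin A1).ker ≤ (tensorDiag n k).ker := by
  intro Z hZ
  by_contra hne
  obtain ⟨i, hi⟩ := h.exists_tApplyLin_mul_pos hne
  simp [LinearMap.mem_ker.1 hZ] at hi

theorem exists_isPPair (h : VPII A1 A2) (hk : Odd k) : ∃ M₁ M₂, IsPPair M₁ M₂ ∧
    (∀ x, tProd A1 x = M₁ (x ^ k)) ∧ ∀ x, tProd A2 x = M₂ (x ^ k) := by
  have hdiag : Surjective (tensorDiag n k) := surjective_tensorDiag hk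
  obtain ⟨M₁, hM₁⟩ := exists_eq_comp_of_surjective_of_ker_le hdiag h.ker_tApplyLin_le
  obtain ⟨M₂, hM₂⟩ := exists_eq_comp_of_surjective_of_ker_le hdiag h.symm.ker_tApplyLin_le
  refine ⟨M₁, M₂, fun y hy => ?_, fun x => ?_, fun x => ?_⟩
  · obtain ⟨Z, rfl⟩ := hdiag y
    simpa only [hM₁, hM₂, LinearMap.comp_apply] using h.exists_tApplyLin_mul_pos hy
  · rw [← tApplyLin_tensorPow, hM₁, LinearMap.comp_apply, tensorDiag_tensorPow]
  · rw [← tApplyLin_tensorPow, hM₂, LinearMap.comp_apply, tensorDiag_tensorPow]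

end VPII

theorem vtcpSol_iff_inf_eq_zero {q1 q2 x : Fin n → ℝ} :
    VTCPSol A1 A2 q1 q2 x ↔ (q1 + tProd A1 x) ⊓ (q2 + tProd A2 x) = 0 := by
  constructor
  · rintro ⟨h1, h2, hsum⟩
    have hprod := (Finset.sum_eq_zero_iff_of_nonneg fun i _ => mul_nonneg (h1 i) (h2 i)).1 hsum
    funext i
    rcases mul_eq_zero.1 (hprod i (mem_univ i)) with h0 | h0
    · exact (min_eq_left (h0.trans_le (h2 i))).trans h0
    · exact (min_eq_right (h0.trans_le (h1 i))).trans h0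
  · intro h
    have hmin (i : Fin n) : min (q1 i + tProd A1 x i) (q2 i + tProd A2 x i) = 0 := congrFun h i
    refine ⟨fun i => (hmin i).symm.trans_le (min_le_left _ _),
      fun i => (hmin i).symm.trans_le (min_le_right _ _), Finset.sum_eq_zero fun i _ => ?_⟩
    rw [← min_mul_max, hmin, zero_mul]

end Tensors

theorem stmt_15_general {n k : ℕ} (hk : Odd k) (A1 A2 : Fin n → (Fin k → Fin n) → ℝ)
    (hVPII : VPII A1 A2) (q1 q2 : Fin n → ℝ) : ∃! x : Fin n → ℝ, VTCPSol A1 A2 q1 q2 x := by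
  obtain ⟨M₁, M₂, hP, hM₁, hM₂⟩ := hVPII.exists_isPPair hk
  simp only [vtcpSol_iff_inf_eq_zero, hM₁, hM₂]
  exact ((hP.bijective_inf q1 q2).comp (bijective_pi_pow_of_odd hk)).existsUnique 0

/-- If `m > 2` is even, `{A1, A2}` is of type VP-II and `A2` is an R-tensor, then the
VTCP has a unique solution for all `q1, q2`. -/
theorem stmt_15 {m n : ℕ} (hm : 2 < m) (heven : Even m) (hn : 1 ≤ n)
    (A1 A2 : Fin n → (Fin (m - 1) → Fin n) → ℝ)
    (hVPII : VPII A1 A2) (hR : RTensor A2) :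
    ∀ q1 q2 : Fin n → ℝ, ∃! x : Fin n → ℝ, VTCPSol A1 A2 q1 q2 x :=
  stmt_15_general (Nat.Even.sub_odd (by lia) heven odd_one) A1 A2 hVPII
end
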